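/- arXiv:2212.01787 — 2 statements merged into one kernel-verified Lean document; each statement's English description precedes it below -/
import Mathlib

section
/- Let L, M, N be sharp commutative monoids and f : N → M, g : N → L local morphisms of monoids. Then the push-out M ⊔_N L is quasi-integral if and only if for all m ∈ M, l ∈ L, n ∈ N^gp, the equalities f^gp(n) = η_M(m) and -g^gp(n) = η_L(l) (where η denotes the canonical map to the groupification) imply m = 0 and l = 0. -/
/-- `η : M →+ G` exhibits the abelian group `G` as the groupification of the
commutative monoid `M`. -/
def IsGroupification {M G : Type*} [AddCommMonoid M] [AddCommGroup G] (η : M →+ G) : Prop :=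
  (∀ x : G, ∃ a b : M, x = η a - η b) ∧
  (∀ a b : M, η a = η b ↔ ∃ k : M, a + k = b + k)

/-- A commutative monoid is sharp if its unit group is trivial. -/
def IsSharp (M : Type*) [AddCommMonoid M] : Prop := ∀ x : M, IsAddUnit x → x = 0

/-- A morphism of monoids is local if the preimage of the unit group is the unit group. -/
def IsLocalMonoidHom {N M : Type*} [AddCommMonoid N] [AddCommMonoid M] (f : N →+ M) : Prop :=
  ∀ n : N, IsAddUnit (f n) → IsAddUnit n

/-- `(P, iM, iL)` is the push-out `M ⊔_N L` of `f : N →+ M` and `g : N →+ L` in the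
category of commutative monoids. -/
def IsMonPushout {N M L P : Type*} [AddCommMonoid N] [AddCommMonoid M] [AddCommMonoid L]
    [AddCommMonoid P] (f : N →+ M) (g : N →+ L) (iM : M →+ P) (iL : L →+ P) : Prop :=
  iM.comp f = iL.comp g ∧
  ∀ (Q : Type*) [AddCommMonoid Q] (jM : M →+ Q) (jL : L →+ Q),
    jM.comp f = jL.comp g → ∃! h : P →+ Q, h.comp iM = jM ∧ h.comp iL = jL

/-- The saturation of a subset `P` of an abelian group `G`:
`P^sat = { x ∈ G | ∃ a ≥ 1, a • x ∈ P }`. -/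
def saturationOf {G : Type*} [AddCommGroup G] (P : Set G) : Set G :=
  {x : G | ∃ a : ℕ, 0 < a ∧ a • x ∈ P}

/-!
Let `η` be the groupification map of `P`. Universal properties tested against `WithTop ℕ` and
`ℚ / ℤ` show that `iM m + iL l` is invertible only if `m` and `l` are, and that
`η (iM m + iL l) = 0` exactly when `(ηM m, ηL l) = (F n, -G' n)` for some `n`. If
`i : M × L → P` is surjective, this is the whole theorem.

Surjectivity is not available, because `IsMonPushout` tests the universal property in a single
universe, possibly a smaller one than those of `M`, `L` and `P`. What survives is that a
homomorphism from `P` to a monoid in `Type` takes no values outside those it takes on the range of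
`i`. Let `η p = 0`. Tests that are `0` on a face and `⊤` off it give `x` and `y` with
`p + y = i x`, where `i x` lies in the face generated by `p`. If `η (i (x + z)) = 0` for some `z`,
then `i (x + z) = 0` by the condition on `m`, `l`, `n`, so `p` is a unit; a character test puts
the units of `P` in the range of `i`, and the condition applies to `p` itself. Otherwise a
Hahn–Banach argument gives a functional `s` on the groupification that is positive at `i x` and
nonnegative on the face generated by `i x`; as `s (η p) = 0`, a test built from `s ∘ η` on that
face tells `p` from every element in the range of `i`.
-/

lemma exists_addCircle_hom_ne_zero_of_notMem {A : Type*} [AddCommGroup A] {B : AddSubgroup A}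
    {a : A} (ha : a ∉ B) :
    ∃ c : A →+ AddCircle (1 : ℚ), (∀ b ∈ B, c b = 0) ∧ c a ≠ 0 := by
  have hne : (a : A ⧸ B) ≠ 0 := by rwa [Ne, QuotientAddGroup.eq_zero_iff]
  obtain ⟨c, hc⟩ := CharacterModule.exists_character_apply_ne_zero_of_ne_zero hne
  let χ : A ⧸ B →+ AddCircle (1 : ℚ) := c
  refine ⟨χ.comp (QuotientAddGroup.mk' B), fun b hb => ?_, hc⟩
  rw [AddMonoidHom.comp_apply, QuotientAddGroup.mk'_apply, (QuotientAddGroup.eq_zero_iff b).2 hb,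
    map_zero]

section RealFunctional

variable {A : Type*} [AddCommGroup A] {C D : AddSubmonoid A} {a u v : A}

lemma exists_le_maximal_notMem (hv : v ∉ C) :
    ∃ D : AddSubmonoid A, C ≤ D ∧ Maximal (v ∉ ·) D := by
  refine zorn_le_nonempty₀ {D : AddSubmonoid A | v ∉ D} (fun c hc hchain E hE => ?_) C hv
  refine ⟨sSup c, fun hmem => ?_, fun _ => le_sSup⟩
  obtain ⟨E', hE', hvE'⟩ := (AddSubmonoid.mem_sSup_of_directedOn ⟨E, hE⟩ hchain.directedOn).1 hmem
  exact hc hE' hvE'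

lemma exists_sub_nsmul_mem_of_maximal_notMem (hD : Maximal (v ∉ ·) D) (ha : a ∉ D) :
    ∃ n : ℕ, v - n • a ∈ D := by
  have hv : v ∈ D ⊔ AddSubmonoid.multiples a := by
    by_contra hv
    exact ha (hD.le_of_ge hv le_sup_left
      (AddSubmonoid.mem_sup_right (AddSubmonoid.mem_multiples a)))
  obtain ⟨d, hd, _, ⟨n, rfl⟩, rfl⟩ := AddSubmonoid.mem_sup.1 hv
  exact ⟨n, by simpa using hd⟩

lemma neg_mem_of_neg_nsmul_mem {n : ℕ} (hn : n ≠ 0) (hu : u ∈ D) (h : -(n • u) ∈ D) : -u ∈ D := by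
  obtain ⟨k, rfl⟩ := Nat.exists_eq_succ_of_ne_zero hn
  have key := add_mem h (nsmul_mem hu k)
  rwa [succ_nsmul, neg_add_rev, neg_add_cancel_right] at key

lemma isSpanning_of_maximal_neg_notMem (hu : u ∈ D) (hD : Maximal (-u ∉ ·) D) :
    D.IsSpanning := by
  intro a
  by_contra! ⟨ha, hna⟩
  obtain ⟨m, hm⟩ := exists_sub_nsmul_mem_of_maximal_notMem hD ha
  obtain ⟨n, hn⟩ := exists_sub_nsmul_mem_of_maximal_notMem hD hna
  have hm0 : m ≠ 0 := by rintro rfl; exact hD.prop (by simpa using hm)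
  have key : -((n + m) • u) ∈ D := by
    convert! add_mem (nsmul_mem hm n) (nsmul_mem hn m) using 1
    module
  exact hD.prop (neg_mem_of_neg_nsmul_mem (by omega) hu key)

/-- The positive cone that a submonoid `D` of an abelian group, viewed as the set of nonnegative
elements of a preorder, induces on the quotient by the elements equivalent to `0`. -/
def quotientSupportCone (D : AddSubmonoid A) : AddGroupCone (A ⧸ D.support) where
  __ := D.map (QuotientAddGroup.mk' D.support)
  eq_zero_of_mem_of_neg_mem' := by
    rintro _ ⟨a, ha, rfl⟩ ⟨b, hb, hab⟩
    refine (QuotientAddGroup.eq_zero_iff a).2 ⟨ha, ?_⟩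
    have hsum : b + a ∈ D.support := by
      rw [← QuotientAddGroup.eq_zero_iff, QuotientAddGroup.mk_add]
      exact eq_neg_iff_add_eq_zero.1 hab
    simpa using add_mem hb hsum.2

lemma mk_mem_quotientSupportCone : (a : A ⧸ D.support) ∈ quotientSupportCone D ↔ a ∈ D := by
  refine ⟨?_, fun ha => ⟨a, ha, rfl⟩⟩
  rintro ⟨d, hd, hda⟩
  simpa using add_mem hd (QuotientAddGroup.eq.1 hda).1

/-- Hölder's theorem for the total preorder on `A` whose nonnegative elements are those of `D`. -/
lemma exists_addMonoidHom_real_nonneg_iff (hD : D.IsSpanning)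
    (harch : ∀ a b, -b ∉ D → ∃ n : ℕ, n • b - a ∈ D) :
    ∃ s : A →+ ℝ, ∀ a, 0 ≤ s a ↔ a ∈ D := by
  classical
  have : HasMemOrNegMem (quotientSupportCone D) := ⟨fun x => by
    induction x using QuotientAddGroup.induction_on with
    | H a => simpa only [← QuotientAddGroup.mk_neg, mk_mem_quotientSupportCone] using hD a⟩
  let : LinearOrder (A ⧸ D.support) := .mkOfAddGroupCone (quotientSupportCone D)
  have : IsOrderedAddMonoid (A ⧸ D.support) := .mkOfCone (quotientSupportCone D)
  have mk_le_mk (a b : A) : (a : A ⧸ D.support) ≤ b ↔ b - a ∈ D :=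
    mk_mem_quotientSupportCone (a := b - a)
  have : Archimedean (A ⧸ D.support) := ⟨fun x y hy => by
    induction x using QuotientAddGroup.induction_on with | H a => ?_
    induction y using QuotientAddGroup.induction_on with | H b => ?_
    obtain ⟨n, hn⟩ := harch a b fun hb => hy.not_ge ((mk_le_mk b 0).2 (by simpa using hb))
    exact ⟨n, (mk_le_mk a (n • b)).2 hn⟩⟩
  obtain ⟨s, hs⟩ := Archimedean.exists_orderAddMonoidHom_real_injective (A ⧸ D.support)
  have hs_mono : StrictMono s := s.monotone'.strictMono_of_injective hs
  refine ⟨(s : A ⧸ D.support →+ ℝ).comp (QuotientAddGroup.mk' D.support), fun a => ?_⟩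
  calc 0 ≤ s a ↔ s 0 ≤ s a := by rw [map_zero]
    _ ↔ ((0 : A) : A ⧸ D.support) ≤ a := hs_mono.le_iff_le
    _ ↔ a ∈ D := by rw [mk_le_mk, sub_zero]

lemma exists_addMonoidHom_real_pos (hu : u ∈ C) (hnu : -u ∉ C)
    (hunit : ∀ a, ∃ n : ℕ, n • u - a ∈ C) :
    ∃ s : A →+ ℝ, 0 < s u ∧ ∀ c ∈ C, 0 ≤ s c := by
  obtain ⟨D, hCD, hD⟩ := exists_le_maximal_notMem hnu
  obtain ⟨s, hs⟩ := exists_addMonoidHom_real_nonneg_iff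
    (isSpanning_of_maximal_neg_notMem (hCD hu) hD) fun a b hb => by
      -- Maximality makes `b` at least comparable to `u`, and `u` dominates `a`.
      obtain ⟨m, hm⟩ := exists_sub_nsmul_mem_of_maximal_notMem hD hb
      obtain ⟨n, hn⟩ := hunit a
      refine ⟨n * m, ?_⟩
      convert! add_mem (nsmul_mem hm n) (hCD hn) using 1
      module
  refine ⟨s, ?_, fun c hc => (hs c).2 (hCD hc)⟩
  simpa using mt (hs (-u)).1 hD.prop

lemma exists_sub_of_mem_closure (ha : a ∈ AddSubgroup.closure (C : Set A)) :
    ∃ c ∈ C, ∃ d ∈ C, a = c - d := by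
  induction ha using AddSubgroup.closure_induction with
  | mem c hc => exact ⟨c, hc, 0, zero_mem C, (sub_zero c).symm⟩
  | zero => exact ⟨0, zero_mem C, 0, zero_mem C, (sub_zero 0).symm⟩
  | add _ _ _ _ ha hb =>
    obtain ⟨c, hc, d, hd, rfl⟩ := ha
    obtain ⟨c', hc', d', hd', rfl⟩ := hb
    exact ⟨c + c', add_mem hc hc', d + d', add_mem hd hd', sub_add_sub_comm c d c' d'⟩
  | neg _ _ ha =>
    obtain ⟨c, hc, d, hd, rfl⟩ := ha
    exact ⟨d, hd, c, hc, neg_sub c d⟩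

/-- A functional on the subgroup generated by `C` extends to all of `A` because `ℝ` is
divisible. -/
lemma exists_addMonoidHom_real_pos_of_forall_mem (hu : u ∈ C) (hnu : -u ∉ C)
    (hunit : ∀ c ∈ C, ∃ n : ℕ, n • u - c ∈ C) :
    ∃ s : A →+ ℝ, 0 < s u ∧ ∀ c ∈ C, 0 ≤ s c := by
  let H := AddSubgroup.closure (C : Set A)
  have hCH {c : A} (hc : c ∈ C) : c ∈ H := AddSubgroup.subset_closure hc
  obtain ⟨t, htu, ht⟩ := exists_addMonoidHom_real_pos (C := C.comap H.subtype) (u := ⟨u, hCH hu⟩)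
    hu hnu fun ⟨a, ha⟩ => by
      obtain ⟨c, hc, d, hd, rfl⟩ := exists_sub_of_mem_closure ha
      obtain ⟨n, hn⟩ := hunit c hc
      exact ⟨n, show n • u - (c - d) ∈ C by simpa [sub_add] using add_mem hn hd⟩
  obtain ⟨s, rfl⟩ := (Module.Baer.of_divisible (A := ℝ)).extension_property_addMonoidHom
    H.subtype H.subtype_injective t
  exact ⟨s, htu, fun c hc => ht ⟨c, hCH hc⟩ hc⟩

end RealFunctional

section Face

variable {P Q : Type*} [AddCommMonoid P] [AddCommMonoid Q]

lemma mem_saturation_multiples_self (x : P) : x ∈ (AddSubmonoid.multiples x).saturation :=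
  AddSubmonoid.le_toAddSubmonoid_saturation (AddSubmonoid.mem_multiples x)

open Classical in
/-- The extension by `⊤` of a homomorphism defined on a face of `P`; Mathlib's
`SaturatedAddSubmonoid P` is the type of faces of `P`. -/
noncomputable def topExtend (T : SaturatedAddSubmonoid P) (c : T →+ Q) : P →+ WithTop Q where
  toFun x := if hx : x ∈ T then (c ⟨x, hx⟩ : WithTop Q) else ⊤
  map_zero' := (dif_pos (zero_mem T)).trans (congrArg WithTop.some (map_zero c))
  map_add' x y := by
    have hxy : x + y ∈ T ↔ x ∈ T ∧ y ∈ T := T.addSaturated.add_mem_iff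
    by_cases hx : x ∈ T
    · by_cases hy : y ∈ T
      · simp only [hxy, hx, hy, and_self, dite_true, ← WithTop.coe_add, ← map_add]
        rfl
      · simp [hxy, hy]
    · simp [hxy, hx]

variable {T : SaturatedAddSubmonoid P} (c : T →+ Q) {x : P}

lemma topExtend_of_mem (hx : x ∈ T) : topExtend T c x = c ⟨x, hx⟩ := dif_pos hx

lemma topExtend_of_notMem (hx : x ∉ T) : topExtend T c x = ⊤ := dif_neg hx

variable (T) in
/-- The indicator of a face `T`, as a homomorphism: `0` on `T` and `⊤` off it. -/
noncomputable def faceIndicator : P →+ WithTop ℕ := topExtend T 0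

lemma faceIndicator_ne_top_iff : faceIndicator T x ≠ ⊤ ↔ x ∈ T := by
  by_cases hx : x ∈ T <;> simp [faceIndicator, topExtend_of_mem, topExtend_of_notMem, hx]

lemma faceIndicator_eq_iff {T' : SaturatedAddSubmonoid Q} {y : Q} :
    faceIndicator T x = faceIndicator T' y ↔ (x ∈ T ↔ y ∈ T') := by
  by_cases hx : x ∈ T <;> by_cases hy : y ∈ T' <;>
    simp [faceIndicator, topExtend_of_mem, topExtend_of_notMem, hx, hy]

/-- The face of `P` on which a `WithTop`-valued homomorphism is finite. -/
def finiteFace (h : P →+ WithTop Q) : SaturatedAddSubmonoid P where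
  carrier := {x | h x ≠ ⊤}
  zero_mem' := by simp
  add_mem' hx hy := by simpa only [Set.mem_ofPred_eq, map_add, WithTop.add_ne_top] using ⟨hx, hy⟩
  addSaturated x y hxy := by
    have hxy' : h (x + y) ≠ ⊤ := hxy
    rwa [map_add, WithTop.add_ne_top] at hxy'

end Face

/-- `i : K →+ P` has the universal property of the quotient of `K` by the kernel congruence of `i`,
as far as monoids in `Type` can test it. This stands in for surjectivity of `i`, which a universal
property tested in too small a universe does not provide. -/
def IsSmallQuotient {K P : Type*} [AddCommMonoid K] [AddCommMonoid P] (i : K →+ P) : Prop :=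
  ∀ (Q : Type) [AddCommMonoid Q] (σ : K →+ Q), (∀ z z', i z = i z' → σ z = σ z') →
    ∃! h : P →+ Q, h.comp i = σ

namespace IsSmallQuotient

variable {K P A : Type*} [AddCommMonoid K] [AddCommMonoid P] [AddCommGroup A] {i : K →+ P}

lemma exists_apply_eq (hi : IsSmallQuotient i) {Q : Type} [AddCommMonoid Q] (h : P →+ Q) (p : P) :
    ∃ z, h (i z) = h p := by
  let R := AddMonoidHom.mrange (h.comp i)
  obtain ⟨h', hh', -⟩ := hi R (h.comp i).mrangeRestrict fun z z' hz =>
    Subtype.ext (congrArg h hz)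
  have heq : R.subtype.comp h' = h := by
    refine (hi Q (h.comp i) fun z z' hz => congrArg h hz).unique ?_ rfl
    rw [AddMonoidHom.comp_assoc, hh']
    rfl
  obtain ⟨z, hz⟩ := (h' p).2
  exact ⟨z, hz.trans (DFunLike.congr_fun heq p)⟩

lemma exists_apply_eq_of_mem (hi : IsSmallQuotient i) (T T' : SaturatedAddSubmonoid P)
    {Q : Type} [AddCommMonoid Q] (c : T →+ Q) {p : P} (hp : p ∈ T) :
    ∃ z, ∃ hz : i z ∈ T, c ⟨i z, hz⟩ = c ⟨p, hp⟩ ∧ (i z ∈ T' → p ∈ T') := by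
  obtain ⟨z, hz⟩ := hi.exists_apply_eq ((topExtend T c).prod (faceIndicator T')) p
  have hc : topExtend T c (i z) = topExtend T c p := congrArg Prod.fst hz
  have hT' : faceIndicator T' (i z) = faceIndicator T' p := congrArg Prod.snd hz
  have hzT : i z ∈ T := by
    by_contra hzT
    rw [topExtend_of_notMem c hzT, topExtend_of_mem c hp] at hc
    exact WithTop.top_ne_coe hc
  rw [topExtend_of_mem c hzT, topExtend_of_mem c hp, WithTop.coe_inj] at hc
  exact ⟨z, hzT, hc, (faceIndicator_eq_iff.1 hT').1⟩

lemma exists_add_eq_of_mem (hi : IsSmallQuotient i) {T : SaturatedAddSubmonoid P} {p : P}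
    (hp : p ∈ T) : ∃ x, i x ∈ T ∧ ∃ y, p + y = i x := by
  let T' := ((T.toAddSubmonoid.comap i).map i).saturation
  obtain ⟨z, hzT, -, hz⟩ := hi.exists_apply_eq_of_mem T T' (0 : T →+ ℕ) hp
  have hpT' : p ∈ T' := hz (AddSubmonoid.le_toAddSubmonoid_saturation ⟨z, hzT, rfl⟩)
  obtain ⟨y, x, hx, hxy⟩ := AddSubmonoid.mem_saturation_iff.1 hpT'
  exact ⟨x, hx, y, hxy.symm⟩

lemma exists_apply_add_mem_of_mem_saturation (hi : IsSmallQuotient i) {R : AddSubmonoid K} {z : K}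
    (hz : i z ∈ (R.map i).saturation) : ∃ w, i (z + w) ∈ R.map i := by
  let G := ((R.map i).comap i).saturation
  have hG {x : K} : x ∈ G ↔ ∃ w, i (x + w) ∈ R.map i := AddSubmonoid.mem_saturation_iff
  obtain ⟨h, hh, -⟩ := hi (WithTop ℕ) (faceIndicator G) fun x x' hx => by
    simp only [faceIndicator_eq_iff, hG, map_add, hx]
  have mem_finiteFace (x : K) : i x ∈ finiteFace h ↔ x ∈ G := by
    rw [← faceIndicator_ne_top_iff (T := G), ← hh]
    rfl
  have hle : (R.map i).saturation ≤ finiteFace h := by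
    rw [AddSubmonoid.saturation_le_iff_le]
    rintro _ ⟨r, hr, rfl⟩
    exact (mem_finiteFace r).2 (AddSubmonoid.le_toAddSubmonoid_saturation ⟨r, hr, rfl⟩)
  exact hG.1 ((mem_finiteFace z).1 (hle hz))

lemma exists_apply_add_eq_zero_of_isAddUnit (hi : IsSmallQuotient i) {z : K}
    (hz : IsAddUnit (i z)) : ∃ w, i (z + w) = 0 := by
  rw [← SaturatedAddSubmonoid.mem_bot_iff, ← AddSubmonoid.saturation_bot,
    ← AddSubmonoid.map_bot i] at hz
  obtain ⟨w, hw⟩ := hi.exists_apply_add_mem_of_mem_saturation hz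
  exact ⟨w, by simpa using hw⟩

lemma mem_mrange_of_isAddUnit (hi : IsSmallQuotient i) {p : P} (hp : IsAddUnit p) :
    p ∈ AddMonoidHom.mrange i := by
  let B : AddSubgroup (AddUnits P) :=
    { (AddMonoidHom.mrange i).comap (AddUnits.coeHom P) with
      neg_mem' := by
        rintro v ⟨z, hz⟩
        obtain ⟨w, hw⟩ := hi.exists_apply_add_eq_zero_of_isAddUnit (by rw [hz]; exact v.isAddUnit)
        refine ⟨w, AddUnits.eq_neg_of_add_eq_zero_left ?_⟩
        rw [← AddUnits.coeHom_apply, ← hz, ← map_add, hw] }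
  by_contra hpi
  obtain ⟨χ, hχB, hχp⟩ := exists_addCircle_hom_ne_zero_of_notMem (B := B) (a := hp.addUnit) hpi
  let toAddUnits : (⊥ : SaturatedAddSubmonoid P) →+ AddUnits P :=
    IsAddUnit.liftRight (AddSubmonoidClass.subtype _)
      fun x => SaturatedAddSubmonoid.mem_bot_iff.1 x.2
  obtain ⟨z, hz, hzp, -⟩ := hi.exists_apply_eq_of_mem ⊥ ⊤ (χ.comp toAddUnits)
    (SaturatedAddSubmonoid.mem_bot_iff.2 hp)
  refine hχp ?_
  calc χ hp.addUnit = χ (toAddUnits ⟨p, _⟩) := congrArg χ (AddUnits.ext rfl)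
    _ = χ (toAddUnits ⟨i z, hz⟩) := hzp.symm
    _ = 0 := hχB _ ⟨z, rfl⟩

lemma exists_addMonoidHom_real_pos (hi : IsSmallQuotient i) {η : P →+ A} {x : K}
    (hx : ∀ z, η (i (x + z)) ≠ 0) :
    ∃ s : A →+ ℝ, 0 < s (η (i x)) ∧
      ∀ z, i z ∈ (AddSubmonoid.multiples (i x)).saturation → 0 ≤ s (η (i z)) := by
  let T := (AddSubmonoid.multiples (i x)).saturation
  have hxT : i x ∈ T := mem_saturation_multiples_self (i x)
  let C := (T.toAddSubmonoid.comap i).map (η.comp i)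
  have hnu : -η (i x) ∉ C := by
    rintro ⟨z, -, hz⟩
    refine hx z ?_
    rw [map_add, map_add, ← neg_eq_iff_add_eq_zero]
    exact hz.symm
  have hunit : ∀ c ∈ C, ∃ n : ℕ, n • η (i x) - c ∈ C := by
    rintro _ ⟨z, hz, rfl⟩
    have hz' : i z ∈ ((AddSubmonoid.multiples x).map i).saturation := by
      rwa [AddSubmonoid.multiples_eq_closure, AddMonoidHom.map_mclosure, Set.image_singleton,
        ← AddSubmonoid.multiples_eq_closure]
    obtain ⟨w, _, ⟨n, rfl⟩, hn⟩ := hi.exists_apply_add_mem_of_mem_saturation hz'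
    have hw : i z + i w = n • i x := by simpa using hn.symm
    refine ⟨n, w, (T.addSaturated (hw ▸ nsmul_mem hxT n)).2, ?_⟩
    simp [← map_nsmul η, ← hw]
  obtain ⟨s, hsx, hs⟩ := exists_addMonoidHom_real_pos_of_forall_mem (C := C) ⟨x, hxT, rfl⟩ hnu hunit
  exact ⟨s, hsx, fun z hz => hs _ ⟨z, hz, rfl⟩⟩

/-- If `η p = 0`, then `p` lies in the face generated by the `i z` with `s (η (i z)) = 0`; this
face contains `i x` along with `p`, although `s (η (i x))` is positive. -/
lemma map_ne_zero_of_add_eq (hi : IsSmallQuotient i) {η : P →+ A} {p y : P} {x : K}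
    (hpx : p + y = i x) (hxp : i x ∈ (AddSubmonoid.multiples p).saturation)
    (hx : ∀ z, η (i (x + z)) ≠ 0) : η p ≠ 0 := by
  intro hp
  obtain ⟨s, hsx, hs⟩ := hi.exists_addMonoidHom_real_pos hx
  let T := (AddSubmonoid.multiples (i x)).saturation
  have hxT : i x ∈ T := mem_saturation_multiples_self (i x)
  have hpT : p ∈ T := (T.addSaturated (hpx ▸ hxT)).1
  let R := (T.toAddSubmonoid ⊓ AddMonoidHom.mker (s.comp η)).comap i
  obtain ⟨z, hzT, hzp, hzR⟩ := hi.exists_apply_eq_of_mem T (R.map i).saturation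
    ((s.comp η).comp T.toAddSubmonoid.subtype) hpT
  have hsz : s (η (i z)) = 0 := hzp.trans ((congrArg s hp).trans (map_zero s))
  have hpR : p ∈ (R.map i).saturation :=
    hzR (AddSubmonoid.le_toAddSubmonoid_saturation ⟨z, ⟨hzT, hsz⟩, rfl⟩)
  have hxR : i x ∈ (R.map i).saturation :=
    AddSubmonoid.saturation_le_iff_le.2 (AddSubmonoid.multiples_le.2 hpR) hxp
  obtain ⟨w, r, ⟨hrT, hr⟩, hrw⟩ := hi.exists_apply_add_mem_of_mem_saturation hxR
  rw [map_add] at hrw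
  have hsum : s (η (i x)) + s (η (i w)) = 0 := by
    rw [← map_add, ← map_add, ← hrw]; exact hr
  linarith [hs w (T.addSaturated (hrw ▸ hrT)).2]

theorem eq_zero_of_map_eq_zero (hi : IsSmallQuotient i) {η : P →+ A}
    (hη : ∀ z, η (i z) = 0 → i z = 0) {p : P} (hp : η p = 0) : p = 0 := by
  obtain ⟨x, hxp, y, hpx⟩ := hi.exists_add_eq_of_mem (T := (AddSubmonoid.multiples p).saturation)
    (mem_saturation_multiples_self p)
  obtain ⟨z, hz⟩ : ∃ z, η (i (x + z)) = 0 := by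
    by_contra! hx
    exact hi.map_ne_zero_of_add_eq hpx hxp hx hp
  have hpunit : IsAddUnit p := by
    refine .of_add_eq_zero (y + i z) ?_
    rw [← add_assoc, hpx, ← map_add, hη _ hz]
  obtain ⟨z', rfl⟩ := hi.mem_mrange_of_isAddUnit hpunit
  exact hη z' hp

end IsSmallQuotient

namespace IsGroupification

variable {M G : Type*} [AddCommMonoid M] [AddCommGroup G] {η : M →+ G}

lemma isLocalizationMap (hη : IsGroupification η) : AddSubmonoid.IsLocalizationMap ⊤ η where
  map_addUnits y := AddGroup.isAddUnit (η y)
  surj x := by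
    obtain ⟨a, b, rfl⟩ := hη.1 x
    exact ⟨(a, ⟨b, trivial⟩), sub_add_cancel (η a) (η b)⟩
  exists_of_eq {x y} hxy := by
    obtain ⟨k, hk⟩ := (hη.2 x y).1 hxy
    exact ⟨⟨k, trivial⟩, by simpa only [add_comm k] using hk⟩

lemma exists_comp_eq (hη : IsGroupification η) {B : Type*} [AddCommGroup B] (φ : M →+ B) :
    ∃ ψ : G →+ B, ψ.comp η = φ := by
  let ηloc : AddSubmonoid.LocalizationMap (⊤ : AddSubmonoid M) G := ⟨η, hη.isLocalizationMap⟩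
  exact ⟨ηloc.lift (g := φ) fun y => AddGroup.isAddUnit (φ y), ηloc.lift_comp _⟩

lemma hom_ext (hη : IsGroupification η) {B : Type*} [AddCommGroup B] {φ ψ : G →+ B}
    (h : φ.comp η = ψ.comp η) : φ = ψ := by
  ext x
  obtain ⟨a, b, rfl⟩ := hη.1 x
  rw [map_sub, map_sub]
  exact congrArg₂ _ (DFunLike.congr_fun h a) (DFunLike.congr_fun h b)

end IsGroupification

namespace IsMonPushout

section

universe uN uM uL uP uQ

variable {N : Type uN} {M : Type uM} {L : Type uL} {P : Type uP}
  [AddCommMonoid N] [AddCommMonoid M] [AddCommMonoid L] [AddCommMonoid P]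
  {f : N →+ M} {g : N →+ L} {iM : M →+ P} {iL : L →+ P}

lemma existsUnique_hom (hpo : IsMonPushout.{uN, uM, uL, uP, uQ} f g iM iL)
    {Q : Type} [AddCommMonoid Q] {jM : M →+ Q} {jL : L →+ Q} (hj : jM.comp f = jL.comp g) :
    ∃! h : P →+ Q, h.comp iM = jM ∧ h.comp iL = jL := by
  let up : Q →+ ULift.{uQ} Q := AddEquiv.ulift.symm.toAddMonoidHom
  let down : ULift.{uQ} Q →+ Q := AddEquiv.ulift.toAddMonoidHom
  obtain ⟨h, ⟨hM, hL⟩, huniq⟩ := hpo.2 (ULift.{uQ} Q) (up.comp jM) (up.comp jL) (by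
    rw [AddMonoidHom.comp_assoc, hj, AddMonoidHom.comp_assoc])
  refine ⟨down.comp h, ⟨?_, ?_⟩, ?_⟩
  · rw [AddMonoidHom.comp_assoc, hM]; rfl
  · rw [AddMonoidHom.comp_assoc, hL]; rfl
  · rintro h' ⟨rfl, rfl⟩
    rw [← huniq (up.comp h') ⟨rfl, rfl⟩]
    rfl

end

variable {N M L P : Type*} [AddCommMonoid N] [AddCommMonoid M] [AddCommMonoid L] [AddCommMonoid P]
  {f : N →+ M} {g : N →+ L} {iM : M →+ P} {iL : L →+ P}

lemma isSmallQuotient_coprod (hpo : IsMonPushout f g iM iL) :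
    IsSmallQuotient (iM.coprod iL) := by
  intro Q _ σ hσ
  have hcomm : (σ.comp (.inl M L)).comp f = (σ.comp (.inr M L)).comp g := by
    ext n
    exact hσ _ _ (by simpa using DFunLike.congr_fun hpo.1 n)
  have hiff (h : P →+ Q) : h.comp (iM.coprod iL) = σ ↔
      h.comp iM = σ.comp (.inl M L) ∧ h.comp iL = σ.comp (.inr M L) := by
    constructor
    · rintro rfl
      constructor <;> ext <;> simp
    · rintro ⟨hM, hL⟩
      rw [AddMonoidHom.comp_coprod, hM, hL, ← AddMonoidHom.comp_coprod,
        AddMonoidHom.coprod_inl_inr, AddMonoidHom.comp_id]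
  simpa only [hiff] using hpo.existsUnique_hom hcomm

lemma isAddUnit_of_isAddUnit_add (hpo : IsMonPushout f g iM iL)
    (hfg : ∀ n, IsAddUnit (f n) ↔ IsAddUnit (g n)) {m : M} {l : L}
    (h : IsAddUnit (iM m + iL l)) : IsAddUnit m ∧ IsAddUnit l := by
  have hj : (faceIndicator (⊥ : SaturatedAddSubmonoid M)).comp f =
      (faceIndicator (⊥ : SaturatedAddSubmonoid L)).comp g := by
    ext n : 1
    simpa only [AddMonoidHom.comp_apply, faceIndicator_eq_iff, SaturatedAddSubmonoid.mem_bot_iff]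
      using hfg n
  obtain ⟨k, ⟨hkM, hkL⟩, -⟩ := hpo.existsUnique_hom hj
  have hmem : iM m + iL l ∈ finiteFace k :=
    (bot_le : ⊥ ≤ finiteFace k) (SaturatedAddSubmonoid.mem_bot_iff.2 h)
  obtain ⟨hm, hl⟩ : iM m ∈ finiteFace k ∧ iL l ∈ finiteFace k := (finiteFace k).addSaturated hmem
  constructor
  · rw [← SaturatedAddSubmonoid.mem_bot_iff, ← faceIndicator_ne_top_iff, ← hkM]
    exact hm
  · rw [← SaturatedAddSubmonoid.mem_bot_iff, ← faceIndicator_ne_top_iff, ← hkL]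
    exact hl

lemma groupification_map_add_eq_zero {Ngp Mgp Lgp Pgp : Type*} [AddCommGroup Ngp]
    [AddCommGroup Mgp] [AddCommGroup Lgp] [AddCommGroup Pgp] (hpo : IsMonPushout f g iM iL)
    {ηN : N →+ Ngp} (hN : IsGroupification ηN) {ηM : M →+ Mgp} (hM : IsGroupification ηM)
    {ηL : L →+ Lgp} (hL : IsGroupification ηL) (ηP : P →+ Pgp)
    {F : Ngp →+ Mgp} (hF : F.comp ηN = ηM.comp f) {G : Ngp →+ Lgp} (hG : G.comp ηN = ηL.comp g)
    {m : M} {l : L} {n : Ngp} (hm : F n = ηM m) (hl : -(G n) = ηL l) :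
    ηP (iM m + iL l) = 0 := by
  obtain ⟨α, hα⟩ := hM.exists_comp_eq (ηP.comp iM)
  obtain ⟨β, hβ⟩ := hL.exists_comp_eq (ηP.comp iL)
  have hαβ : α.comp F = β.comp G := hN.hom_ext <| by
    calc (α.comp F).comp ηN = (α.comp ηM).comp f := by
          rw [AddMonoidHom.comp_assoc, hF, AddMonoidHom.comp_assoc]
      _ = (β.comp ηL).comp g := by
          rw [hα, hβ, AddMonoidHom.comp_assoc, hpo.1, AddMonoidHom.comp_assoc]
      _ = (β.comp G).comp ηN := by
          rw [AddMonoidHom.comp_assoc, ← hG, AddMonoidHom.comp_assoc]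
  calc ηP (iM m + iL l) = ηP (iM m) + ηP (iL l) := map_add ..
    _ = α (ηM m) + β (ηL l) := congrArg₂ _ (DFunLike.congr_fun hα m).symm
        (DFunLike.congr_fun hβ l).symm
    _ = α (F n) - β (G n) := by rw [← hm, ← hl, map_neg, sub_eq_add_neg]
    _ = 0 := sub_eq_zero.2 (DFunLike.congr_fun hαβ n)

lemma exists_of_groupification_map_add_eq_zero {Ngp Mgp Lgp Pgp : Type*} [AddCommGroup Ngp]
    [AddCommGroup Mgp] [AddCommGroup Lgp] [AddCommGroup Pgp] (hpo : IsMonPushout f g iM iL)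
    {ηN : N →+ Ngp} {ηM : M →+ Mgp} {ηL : L →+ Lgp} {ηP : P →+ Pgp} (hP : IsGroupification ηP)
    {F : Ngp →+ Mgp} (hF : F.comp ηN = ηM.comp f) {G : Ngp →+ Lgp} (hG : G.comp ηN = ηL.comp g)
    {m : M} {l : L} (h : ηP (iM m + iL l) = 0) :
    ∃ n, F n = ηM m ∧ -(G n) = ηL l := by
  let B : AddSubgroup (Mgp × Lgp) := (F.prod (-G)).range
  suffices hmem : (ηM m, ηL l) ∈ B by
    obtain ⟨n, hn⟩ := hmem
    exact ⟨n, congrArg Prod.fst hn, congrArg Prod.snd hn⟩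
  by_contra hmem
  obtain ⟨χ, hχB, hχ⟩ := exists_addCircle_hom_ne_zero_of_notMem hmem
  let jM : M →+ AddCircle (1 : ℚ) := (χ.comp (.inl Mgp Lgp)).comp ηM
  let jL : L →+ AddCircle (1 : ℚ) := (χ.comp (.inr Mgp Lgp)).comp ηL
  have hj : jM.comp f = jL.comp g := by
    ext n
    have hn : χ (F (ηN n), -(G (ηN n))) = 0 := hχB _ ⟨ηN n, rfl⟩
    rw [show F (ηN n) = ηM (f n) from DFunLike.congr_fun hF n,
      show G (ηN n) = ηL (g n) from DFunLike.congr_fun hG n] at hn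
    rw [← sub_eq_zero, ← hn]
    simp [jM, jL, ← map_sub]
  obtain ⟨k, ⟨hkM, hkL⟩, -⟩ := hpo.existsUnique_hom hj
  obtain ⟨ψ, rfl⟩ := hP.exists_comp_eq k
  refine hχ ?_
  calc χ (ηM m, ηL l) = jM m + jL l := by simp [jM, jL, ← map_add]
    _ = ψ (ηP (iM m + iL l)) := by rw [← hkM, ← hkL]; simp
    _ = 0 := by rw [h, map_zero]

end IsMonPushout

theorem stmt6_general {N M L P Ngp Mgp Lgp Pgp : Type*}
    [AddCommMonoid N] [AddCommMonoid M] [AddCommMonoid L] [AddCommMonoid P]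
    [AddCommGroup Ngp] [AddCommGroup Mgp] [AddCommGroup Lgp] [AddCommGroup Pgp]
    (hMs : IsSharp M) (hLs : IsSharp L)
    (f : N →+ M) (g : N →+ L) (hfg : ∀ n, IsAddUnit (f n) ↔ IsAddUnit (g n))
    (iM : M →+ P) (iL : L →+ P) (hpo : IsMonPushout f g iM iL)
    (ηN : N →+ Ngp) (hgpN : IsGroupification ηN)
    (ηM : M →+ Mgp) (hgpM : IsGroupification ηM)
    (ηL : L →+ Lgp) (hgpL : IsGroupification ηL)
    (ηP : P →+ Pgp) (hgpP : IsGroupification ηP)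
    (F : Ngp →+ Mgp) (hF : F.comp ηN = ηM.comp f)
    (G' : Ngp →+ Lgp) (hG : G'.comp ηN = ηL.comp g) :
    (∀ p : P, ηP p = 0 → p = 0) ↔
      ∀ (m : M) (l : L) (n : Ngp), F n = ηM m → -(G' n) = ηL l → m = 0 ∧ l = 0 := by
  constructor
  · intro hquasi m l n hm hl
    have hzero : iM m + iL l = 0 :=
      hquasi _ (hpo.groupification_map_add_eq_zero hgpN hgpM hgpL ηP hF hG hm hl)
    obtain ⟨hmu, hlu⟩ := hpo.isAddUnit_of_isAddUnit_add hfg (hzero ▸ isAddUnit_zero)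
    exact ⟨hMs m hmu, hLs l hlu⟩
  · intro hML p hp
    refine hpo.isSmallQuotient_coprod.eq_zero_of_map_eq_zero (η := ηP) ?_ hp
    rintro ⟨m, l⟩ hml
    obtain ⟨n, hm, hl⟩ := hpo.exists_of_groupification_map_add_eq_zero hgpP hF hG hml
    obtain ⟨rfl, rfl⟩ := hML m l n hm hl
    exact map_zero (iM.coprod iL)

/-- Let `L, M, N` be sharp commutative monoids and `f : N → M`, `g : N → L` local
morphisms, with push-out `P = M ⊔_N L`.  Then `P` is quasi-integral if and only if for
all `m ∈ M`, `l ∈ L`, `n ∈ N^gp`, the equalities `f^gp n = ηM m` and `-(g^gp n) = ηL l`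
imply `m = 0` and `l = 0`. -/
theorem stmt6 {N M L P Ngp Mgp Lgp Pgp : Type*}
    [AddCommMonoid N] [AddCommMonoid M] [AddCommMonoid L] [AddCommMonoid P]
    [AddCommGroup Ngp] [AddCommGroup Mgp] [AddCommGroup Lgp] [AddCommGroup Pgp]
    (hNs : IsSharp N) (hMs : IsSharp M) (hLs : IsSharp L)
    (f : N →+ M) (g : N →+ L) (hf : IsLocalMonoidHom f) (hg : IsLocalMonoidHom g)
    (iM : M →+ P) (iL : L →+ P) (hpo : IsMonPushout f g iM iL)
    (ηN : N →+ Ngp) (hgpN : IsGroupification ηN)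
    (ηM : M →+ Mgp) (hgpM : IsGroupification ηM)
    (ηL : L →+ Lgp) (hgpL : IsGroupification ηL)
    (ηP : P →+ Pgp) (hgpP : IsGroupification ηP)
    (F : Ngp →+ Mgp) (hF : F.comp ηN = ηM.comp f)
    (G' : Ngp →+ Lgp) (hG : G'.comp ηN = ηL.comp g) :
    (∀ p : P, ηP p = 0 → p = 0) ↔
      ∀ (m : M) (l : L) (n : Ngp), F n = ηM m → -(G' n) = ηL l → m = 0 ∧ l = 0 :=
  stmt6_general hMs hLs f g (fun n => ⟨fun h => (hf n h).map g, fun h => (hg n h).map f⟩)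
    iM iL hpo ηN hgpN ηM hgpM ηL hgpL ηP hgpP F hF G' hG
end

section
/- Let L, M, N be sharp commutative monoids and f : N → M, g : N → L local morphisms of monoids. Then the push-out M ⊔_N L is quasi-integral if and only if M and L are quasi-integral and, for every n ∈ N^gp, the conditions f^gp(n) ∈ M^int and -g^gp(n) ∈ L^int imply f^gp(n) = 0 and g^gp(n) = 0. -/
/-!
By the universal property, restriction along `M × L → P` is a bijection between homomorphisms out of
`P` and compatible homomorphisms out of `M × L`. The universal property is only tested on monoids in
one universe, unrelated to those of the data, so neither `P` nor the concrete push-out need be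
available as a target, and `M × L → P` is not known to be surjective. All test objects below
therefore lie in `Type`: `ℚ/ℤ` detects elements of abelian groups, `{0, ∞}` detects faces, and
`[0, ∞]` detects order relations.

On the image `S` of `M × L`, vanishing in `P^gp = M^gp ⊕_{N^gp} L^gp` is exactly the condition of
the theorem. The substantial point is the passage from `S` to `P`. If `p ≠ 0` dies in `P^gp`, let
`F` be the face it generates. Some nonzero `u ∈ S ∩ F` lies above `p`, and it is an order unit of
`S ∩ F`. If no nonzero element of `S` dies in `P^gp`, a state on the image of `S ∩ F` which is
positive on `u` gives `φ : F → ℝ`, nonnegative on `S ∩ F`, hence on all of `F`, with `φ p = 0`; this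
contradicts that `u` lies below a multiple of `p`.
-/

universe uN uM uL uP w

section Faces

variable {P Q : Type*} [AddCommMonoid P] [AddCommMonoid Q]

/-- A face of a commutative monoid: a submonoid containing the summands of each of its elements. -/
def IsFace (F : AddSubmonoid P) : Prop := ∀ x y, x + y ∈ F → x ∈ F

/-- The face generated by a submonoid `T`: the elements lying below an element of `T` in the
algebraic preorder. -/
def faceClosure (T : AddSubmonoid P) : AddSubmonoid P where
  carrier := {x | ∃ y, x + y ∈ T}
  zero_mem' := ⟨0, by simp⟩
  add_mem' := by
    rintro a b ⟨y, hy⟩ ⟨z, hz⟩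
    exact ⟨y + z, add_add_add_comm a b y z ▸ T.add_mem hy hz⟩

theorem le_faceClosure (T : AddSubmonoid P) : T ≤ faceClosure T :=
  fun x hx ↦ ⟨0, by simpa using hx⟩

theorem isFace_faceClosure (T : AddSubmonoid P) : IsFace (faceClosure T) := by
  rintro x y ⟨z, hz⟩
  exact ⟨y + z, by rwa [← add_assoc]⟩

theorem faceClosure_le {T G : AddSubmonoid P} (hG : IsFace G) (h : T ≤ G) : faceClosure T ≤ G :=
  fun x ⟨y, hy⟩ ↦ hG x y (h hy)

theorem IsSharp.eq_zero_of_add_eq_zero (hP : IsSharp P) {x y : P} (h : x + y = 0) : x = 0 :=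
  hP x (.of_add_eq_zero y h)

theorem IsSharp.isFace_bot (hP : IsSharp P) : IsFace (⊥ : AddSubmonoid P) :=
  fun _ _ h ↦ hP.eq_zero_of_add_eq_zero h

namespace IsFace

variable {F : AddSubmonoid P}

theorem mem_right (hF : IsFace F) {x y : P} (h : x + y ∈ F) : y ∈ F :=
  hF y x (add_comm x y ▸ h)

open Classical in
/-- The extension of a homomorphism on a face by `⊤`. It turns homomorphisms on faces into test
homomorphisms on the whole monoid. -/
noncomputable def extendTop (hF : IsFace F) (φ : F →+ Q) : P →+ WithTop Q where
  toFun x := if h : x ∈ F then (φ ⟨x, h⟩ : WithTop Q) else ⊤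
  map_zero' := by
    rw [dif_pos F.zero_mem, ← WithTop.coe_zero]
    exact congrArg _ φ.map_zero
  map_add' x y := by
    by_cases hx : x ∈ F
    · by_cases hy : y ∈ F
      · rw [dif_pos hx, dif_pos hy, dif_pos (F.add_mem hx hy), ← WithTop.coe_add, ← φ.map_add]
        rfl
      · rw [dif_neg hy, dif_neg fun h ↦ hy (hF.mem_right h), WithTop.add_top]
    · rw [dif_neg hx, dif_neg fun h ↦ hx (hF x y h), WithTop.top_add]

theorem extendTop_coe (hF : IsFace F) (φ : F →+ Q) (x : F) : hF.extendTop φ x = φ x :=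
  dif_pos x.2

theorem extendTop_of_notMem (hF : IsFace F) (φ : F →+ Q) {x : P} (hx : x ∉ F) :
    hF.extendTop φ x = ⊤ :=
  dif_neg hx

theorem extendTop_zero_eq_zero_iff (hF : IsFace F) {x : P} :
    hF.extendTop (0 : F →+ ℕ) x = 0 ↔ x ∈ F := by
  by_cases hx : x ∈ F
  · simpa [hx] using hF.extendTop_coe (0 : F →+ ℕ) ⟨x, hx⟩
  · simp [hx, hF.extendTop_of_notMem _ hx]

end IsFace

end Faces

section Groups

variable {A : Type*} [AddCommGroup A]

theorem exists_hom_addCircle_apply_ne_zero (B : AddSubgroup A) {x : A} (hx : x ∉ B) :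
    ∃ χ : A →+ AddCircle (1 : ℚ), (∀ b ∈ B, χ b = 0) ∧ χ x ≠ 0 := by
  have hne : (x : A ⧸ B) ≠ 0 := mt (QuotientAddGroup.eq_zero_iff x).1 hx
  obtain ⟨χ, hχ⟩ := CharacterModule.exists_character_apply_ne_zero_of_ne_zero hne
  let χ' : A ⧸ B →+ AddCircle (1 : ℚ) := χ
  refine ⟨χ'.comp (QuotientAddGroup.mk' B), fun b hb ↦ ?_, hχ⟩
  have hb0 : QuotientAddGroup.mk' B b = 0 := (QuotientAddGroup.eq_zero_iff b).2 hb
  rw [AddMonoidHom.comp_apply, hb0, map_zero]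

section Holder

theorem exists_hom_real_nonneg_iff_mem_of_addGroupCone (C : AddGroupCone A)
    (htotal : ∀ x, x ∈ C ∨ -x ∈ C) (harch : ∀ x y, -y ∉ C → ∃ n : ℕ, n • y - x ∈ C) :
    ∃ φ : A →+ ℝ, ∀ x, 0 ≤ φ x ↔ x ∈ C := by
  classical
  have : HasMemOrNegMem C := ⟨htotal⟩
  let : LinearOrder A := .mkOfAddGroupCone C
  have : IsOrderedAddMonoid A := .mkOfCone C
  have hnonneg (x : A) : 0 ≤ x ↔ x ∈ C := by
    rw [PartialOrder.mkOfAddGroupCone_le_iff, sub_zero]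
  have : Archimedean A := ⟨fun x y hy ↦ harch x y <| by
    rwa [← hnonneg, Left.nonneg_neg_iff, not_le]⟩
  obtain ⟨ψ, hψ⟩ := Archimedean.exists_orderAddMonoidHom_real_injective A
  have hmono : StrictMono ψ := ψ.monotone'.strictMono_of_injective hψ
  exact ⟨ψ, fun x ↦ by simpa [hnonneg] using hmono.le_iff_le (a := 0) (b := x)⟩

/-- The largest subgroup contained in `D`, by which one divides to make the preorder with
nonnegative elements `D` a partial order. -/
def submonoidSupport (D : AddSubmonoid A) : AddSubgroup A where
  carrier := {x | x ∈ D ∧ -x ∈ D}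
  zero_mem' := by simp
  add_mem' := fun ⟨ha, ha'⟩ ⟨hb, hb'⟩ ↦ ⟨D.add_mem ha hb, neg_add (_ : A) _ ▸ D.add_mem ha' hb'⟩
  neg_mem' := fun ⟨ha, ha'⟩ ↦ ⟨ha', by simpa using ha⟩

theorem mk_mem_map_mk_support_iff (D : AddSubmonoid A) (x : A) :
    (x : A ⧸ submonoidSupport D) ∈ D.map (QuotientAddGroup.mk' (submonoidSupport D)) ↔ x ∈ D := by
  refine ⟨?_, fun hx ↦ ⟨x, hx, rfl⟩⟩
  rintro ⟨y, hy, hyx⟩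
  have hmem : -y + x ∈ submonoidSupport D := QuotientAddGroup.eq.1 hyx
  simpa using D.add_mem hy hmem.1

/-- The positive cone induced by `D` on the quotient by its support. -/
def supportQuotientCone (D : AddSubmonoid A) : AddGroupCone (A ⧸ submonoidSupport D) where
  __ := D.map (QuotientAddGroup.mk' (submonoidSupport D))
  eq_zero_of_mem_of_neg_mem' := by
    intro a ha ha'
    obtain ⟨x, rfl⟩ := QuotientAddGroup.mk_surjective a
    exact (QuotientAddGroup.eq_zero_iff x).2
      ⟨(mk_mem_map_mk_support_iff D x).1 ha, (mk_mem_map_mk_support_iff D (-x)).1 ha'⟩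

theorem mk_mem_supportQuotientCone {D : AddSubmonoid A} {x : A} :
    (x : A ⧸ submonoidSupport D) ∈ supportQuotientCone D ↔ x ∈ D :=
  mk_mem_map_mk_support_iff D x

theorem exists_hom_real_nonneg_iff_mem (D : AddSubmonoid A) (htotal : ∀ x, x ∈ D ∨ -x ∈ D)
    (harch : ∀ x y, -y ∉ D → ∃ n : ℕ, n • y - x ∈ D) :
    ∃ φ : A →+ ℝ, ∀ x, 0 ≤ φ x ↔ x ∈ D := by
  obtain ⟨φ, hφ⟩ := exists_hom_real_nonneg_iff_mem_of_addGroupCone (supportQuotientCone D)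
    (by
      rintro ⟨x⟩
      exact (htotal x).imp mk_mem_supportQuotientCone.2 mk_mem_supportQuotientCone.2)
    (by
      rintro ⟨x⟩ ⟨y⟩ hy
      obtain ⟨n, hn⟩ := harch x y (mt mk_mem_supportQuotientCone.2 hy)
      exact ⟨n, mk_mem_supportQuotientCone.2 hn⟩)
  exact ⟨φ.comp (QuotientAddGroup.mk' _), fun x ↦ (hφ x).trans mk_mem_supportQuotientCone⟩

end Holder

section States

theorem exists_le_maximal_notMem_s7 {M : Type*} [AddMonoid M] {C : AddSubmonoid M}
    {x : M} (hx : x ∉ C) : ∃ D, C ≤ D ∧ Maximal (x ∉ ·) D := by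
  refine zorn_le_nonempty₀ {D : AddSubmonoid M | x ∉ D} (fun c hc hchain D hD ↦ ?_) C hx
  refine ⟨sSup c, fun hmem ↦ ?_, fun _ ↦ le_sSup⟩
  obtain ⟨E, hE, hxE⟩ := (AddSubmonoid.mem_sSup_of_directedOn ⟨D, hD⟩ hchain.directedOn).1 hmem
  exact hc hE hxE

variable {D : AddSubmonoid A} {u : A}

theorem exists_add_nsmul_eq_of_maximal_notMem (hD : Maximal (u ∉ ·) D) {x : A} (hx : x ∉ D) :
    ∃ d ∈ D, ∃ n : ℕ, d + n • x = u := by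
  have hu : u ∈ D ⊔ AddSubmonoid.multiples x := by
    by_contra hu
    exact hx (hD.le_of_ge hu le_sup_left
      (AddSubmonoid.mem_sup_right (AddSubmonoid.mem_multiples x)))
  obtain ⟨d, hd, _, ⟨n, rfl⟩, h⟩ := AddSubmonoid.mem_sup.1 hu
  exact ⟨d, hd, n, h⟩

theorem mem_or_neg_mem_of_maximal_neg_notMem (hD : Maximal (-u ∉ ·) D) (hu : u ∈ D) (x : A) :
    x ∈ D ∨ -x ∈ D := by
  by_contra! ⟨hx, hx'⟩
  obtain ⟨d, hd, n, hn⟩ := exists_add_nsmul_eq_of_maximal_notMem hD hx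
  obtain ⟨e, he, m, hm⟩ := exists_add_nsmul_eq_of_maximal_notMem hD hx'
  cases n with
  | zero => exact hD.prop (hn ▸ by simpa using hd)
  | succ n =>
    -- The multiples of `x` cancel in the combination `m • hn + (n + 1) • hm`.
    have hneg : -u = m • d + (n + 1) • e + (m + n) • u := by
      rw [eq_sub_of_add_eq hn, eq_sub_of_add_eq hm]
      module
    refine hD.prop ?_
    rw [hneg]
    exact D.add_mem (D.add_mem (D.nsmul_mem hd _) (D.nsmul_mem he _)) (D.nsmul_mem hu _)

theorem exists_hom_real_pos (C : AddSubmonoid A) (hu : u ∈ C)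
    (hunit : ∀ x, ∃ n : ℕ, n • u - x ∈ C) (hneg : -u ∉ C) :
    ∃ φ : A →+ ℝ, (∀ c ∈ C, 0 ≤ φ c) ∧ 0 < φ u := by
  obtain ⟨D, hCD, hD⟩ := exists_le_maximal_notMem_s7 hneg
  have harch (x y : A) (hy : -y ∉ D) : ∃ n : ℕ, n • y - x ∈ D := by
    obtain ⟨d, hd, n, hn⟩ := exists_add_nsmul_eq_of_maximal_notMem hD hy
    obtain ⟨m, hm⟩ := hunit x
    have hsplit : (m * n) • y - x = (m • u - x) + m • d := by
      rw [eq_sub_of_add_eq hn]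
      module
    exact ⟨m * n, hsplit ▸ D.add_mem (hCD hm) (D.nsmul_mem hd m)⟩
  obtain ⟨φ, hφ⟩ := exists_hom_real_nonneg_iff_mem D
    (mem_or_neg_mem_of_maximal_neg_notMem hD (hCD hu)) harch
  refine ⟨φ, fun c hc ↦ (hφ c).2 (hCD hc), ?_⟩
  simpa using mt (hφ (-u)).1 hD.prop

theorem exists_nsmul_sub_mem_of_mem_closure {C : AddSubmonoid A} (hu : u ∈ C)
    (hunit : ∀ c ∈ C, ∃ n : ℕ, n • u - c ∈ C) {x : A}
    (hx : x ∈ AddSubgroup.closure (C : Set A)) : ∃ n : ℕ, n • u - x ∈ C := by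
  -- The two-sided bound is stable under negation.
  suffices ∃ n : ℕ, n • u - x ∈ C ∧ n • u + x ∈ C from this.imp fun _ ↦ And.left
  induction hx using AddSubgroup.closure_induction with
  | mem c hc =>
    obtain ⟨n, hn⟩ := hunit c hc
    exact ⟨n, hn, C.add_mem (C.nsmul_mem hu n) hc⟩
  | zero => exact ⟨0, by simp⟩
  | add x y _ _ ihx ihy =>
    obtain ⟨n, hn, hn'⟩ := ihx
    obtain ⟨m, hm, hm'⟩ := ihy
    refine ⟨n + m, ?_, ?_⟩
    · rw [add_nsmul, add_sub_add_comm]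
      exact C.add_mem hn hm
    · rw [add_nsmul, add_add_add_comm]
      exact C.add_mem hn' hm'
  | neg x _ ih =>
    obtain ⟨n, hn, hn'⟩ := ih
    exact ⟨n, by rwa [sub_neg_eq_add], by rwa [← sub_eq_add_neg]⟩

theorem exists_hom_real_pos_of_closure (C : AddSubmonoid A) (hu : u ∈ C)
    (hunit : ∀ c ∈ C, ∃ n : ℕ, n • u - c ∈ C) (hneg : -u ∉ C) :
    ∃ φ : AddSubgroup.closure (C : Set A) →+ ℝ,
      (∀ w ∈ C.comap (AddSubgroup.closure (C : Set A)).subtype, 0 ≤ φ w) ∧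
        0 < φ ⟨u, AddSubgroup.subset_closure hu⟩ :=
  exists_hom_real_pos _ (AddSubmonoid.mem_comap.2 hu)
    (fun w ↦ exists_nsmul_sub_mem_of_mem_closure hu hunit w.2) hneg

end States

end Groups

section UniqueHomExtension

variable {P : Type*} [AddCommMonoid P]

/-- Homomorphisms from `S` to a monoid in `Type` extend uniquely to `P`. This is what the universal
property of the push-out says about the image of `M × L`; it does not force `S = ⊤`, as `P` may live
in a larger universe. -/
def HasUniqueHomExtension (S : AddSubmonoid P) : Prop :=
  ∀ (Q : Type) [AddCommMonoid Q], Function.Bijective fun h : P →+ Q ↦ h.comp S.subtype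

namespace HasUniqueHomExtension

variable {S F : AddSubmonoid P} {A : Type*} [AddCommGroup A]

theorem exists_apply_eq (hS : HasUniqueHomExtension S) {Q : Type} [AddCommMonoid Q]
    (h : P →+ Q) (p : P) : ∃ s : S, h s = h p := by
  obtain ⟨k, hk⟩ := (hS (S.map h)).2 (h.addSubmonoidMap S)
  have hkh : (S.map h).subtype.comp k = h :=
    (hS Q).1 (AddMonoidHom.ext fun s ↦ congrArg Subtype.val (DFunLike.congr_fun hk s))
  obtain ⟨s, hs, hsp⟩ := (k p).2
  exact ⟨⟨s, hs⟩, hsp.trans (DFunLike.congr_fun hkh p)⟩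

theorem exists_apply_eq_of_isFace (hS : HasUniqueHomExtension S) (hF : IsFace F) {Q : Type}
    [AddCommMonoid Q] (φ : F →+ Q) (x : F) : ∃ s : F, (s : P) ∈ S ∧ φ s = φ x := by
  obtain ⟨s, hs⟩ := hS.exists_apply_eq (hF.extendTop φ) x
  rw [hF.extendTop_coe] at hs
  have hsF : (s : P) ∈ F := by
    by_contra hsF
    exact WithTop.top_ne_coe (hF.extendTop_of_notMem φ hsF ▸ hs)
  refine ⟨⟨s, hsF⟩, s.2, WithTop.coe_injective ?_⟩
  rw [← hs, ← hF.extendTop_coe φ ⟨s, hsF⟩]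

theorem le_faceClosure_inf (hS : HasUniqueHomExtension S) (hF : IsFace F) :
    F ≤ faceClosure (S ⊓ F) := by
  intro x hx
  have hG := isFace_faceClosure (S ⊓ F)
  obtain ⟨s, hsS, hs⟩ :=
    hS.exists_apply_eq_of_isFace hF ((hG.extendTop (0 : _ →+ ℕ)).comp F.subtype) ⟨x, hx⟩
  have hsG : (s : P) ∈ faceClosure (S ⊓ F) := le_faceClosure _ ⟨hsS, s.2⟩
  exact hG.extendTop_zero_eq_zero_iff.1 (hs.symm.trans (hG.extendTop_zero_eq_zero_iff.2 hsG))

theorem apply_mem_closure (hS : HasUniqueHomExtension S) (hF : IsFace F) (η : F →+ A) (x : F) :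
    η x ∈ AddSubgroup.closure ((S.comap F.subtype).map η : Set A) := by
  by_contra hx
  obtain ⟨χ, hχ, hχx⟩ := exists_hom_addCircle_apply_ne_zero _ hx
  obtain ⟨s, hsS, hs⟩ := hS.exists_apply_eq_of_isFace hF (χ.comp η) x
  exact hχx (hs.symm.trans (hχ _ (AddSubgroup.subset_closure ⟨s, hsS, rfl⟩)))

theorem mem_faceClosure_of_coe_mem (hS : HasUniqueHomExtension S) {T : AddSubmonoid S} {s : S}
    (hs : (s : P) ∈ faceClosure (T.map S.subtype)) : s ∈ faceClosure T := by
  have hG := isFace_faceClosure T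
  obtain ⟨y, t, ht, hty⟩ := hs
  obtain ⟨h, hh⟩ := (hS (WithTop ℕ)).2 (hG.extendTop (0 : _ →+ ℕ))
  have hh' (a : S) : h a = 0 ↔ a ∈ faceClosure T :=
    (DFunLike.congr_fun hh a).congr_left.trans hG.extendTop_zero_eq_zero_iff
  have hsum : h s + h y = 0 := by
    rw [← map_add, ← hty]
    exact (hh' t).2 (le_faceClosure T ht)
  exact (hh' s).1 (add_eq_zero.1 hsum).1

theorem isAddUnit_of_coe (hS : HasUniqueHomExtension S) {s : S} (hs : IsAddUnit (s : P)) :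
    IsAddUnit s := by
  obtain ⟨y, hy⟩ := hs.exists_neg
  obtain ⟨z, hz⟩ : s ∈ faceClosure (⊥ : AddSubmonoid S) :=
    hS.mem_faceClosure_of_coe_mem ⟨y, 0, by simp, hy.symm⟩
  exact .of_add_eq_zero z hz

theorem isSharp (hS : HasUniqueHomExtension S) (hSs : IsSharp S) : IsSharp P := by
  intro p hp
  have hF : IsFace (IsAddUnit.addSubmonoid P) := fun _ _ ↦ isAddUnit_of_add_isAddUnit_left
  have hmem := hS.apply_mem_closure hF (.id _) ⟨p, hp⟩
  have hbot : S.comap (IsAddUnit.addSubmonoid P).subtype = ⊥ :=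
    (AddSubmonoid.eq_bot_iff_forall _).2 fun x hx ↦ by
      have hx0 : (⟨x, hx⟩ : S) = 0 := hSs _ (hS.isAddUnit_of_coe x.2)
      exact Subtype.ext (congrArg S.subtype hx0)
  have hp0 : (⟨p, hp⟩ : IsAddUnit.addSubmonoid P) = 0 := by
    simpa [hbot, AddSubgroup.mem_closure_singleton, eq_comm] using hmem
  exact congrArg Subtype.val hp0

theorem exists_hom_real_nonneg (hS : HasUniqueHomExtension S) (hP : IsSharp P) (hF : IsFace F)
    (η : P →+ A) (hη : ∀ s ∈ S, η s = 0 → s = 0) {u : F} (huS : (u : P) ∈ S) (hu0 : (u : P) ≠ 0)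
    (hunit : F ≤ faceClosure (AddSubmonoid.multiples (u : P))) :
    ∃ φ : F →+ ℝ, (∀ x : F, η x = 0 → φ x = 0) ∧ (∀ x, 0 ≤ φ x) ∧ 0 < φ u := by
  let C := (S.comap F.subtype).map (η.comp F.subtype)
  have huC : η u ∈ C := ⟨u, huS, rfl⟩
  have hunitC : ∀ c ∈ C, ∃ n : ℕ, n • η u - c ∈ C := by
    rintro _ ⟨s, hsS, rfl⟩
    obtain ⟨y, k, hk⟩ := hunit s.2
    have hs : (⟨s, hsS⟩ : S) ∈ faceClosure (AddSubmonoid.multiples ⟨(u : P), huS⟩) :=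
      hS.mem_faceClosure_of_coe_mem ⟨y, k • ⟨u, huS⟩, ⟨k, rfl⟩, hk⟩
    obtain ⟨z, n, hn⟩ := hs
    replace hn : n • (u : P) = s + z := congrArg Subtype.val hn
    have hzF : (z : P) ∈ F := hF.mem_right (hn ▸ F.nsmul_mem u.2 n)
    exact ⟨n, ⟨z, hzF⟩, z.2, eq_sub_of_add_eq' (by simp [← map_nsmul, hn])⟩
  have hneg : -η u ∉ C := by
    rintro ⟨s, hsS, hs⟩
    have hηus : η (u + s) = 0 := by
      rw [map_add]
      exact eq_neg_iff_add_eq_zero.1 hs ▸ add_comm _ _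
    have hus : (u : P) + s = 0 := hη _ (S.add_mem huS hsS) hηus
    exact hu0 (hP.eq_zero_of_add_eq_zero hus)
  obtain ⟨ψ, hψC, hψu⟩ := exists_hom_real_pos_of_closure C huC hunitC hneg
  let θ : F →+ AddSubgroup.closure (C : Set A) :=
    (η.comp F.subtype).codRestrict _ (hS.apply_mem_closure hF _)
  refine ⟨ψ.comp θ, fun x hx ↦ ?_, fun x ↦ ?_, hψu⟩
  · have hθ : θ x = 0 := Subtype.ext hx
    rw [AddMonoidHom.comp_apply, hθ, map_zero]
  · obtain ⟨s, hsS, hs⟩ := hS.exists_apply_eq_of_isFace hF (ψ.comp θ) x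
    exact hs ▸ hψC (θ s) ⟨s, hsS, rfl⟩

theorem eq_zero_of_apply_eq_zero (hS : HasUniqueHomExtension S) (hP : IsSharp P) (η : P →+ A)
    (hη : ∀ s ∈ S, η s = 0 → s = 0) {p : P} (hp : η p = 0) : p = 0 := by
  by_contra hp0
  let F := faceClosure (AddSubmonoid.multiples p)
  have hF : IsFace F := isFace_faceClosure _
  have hpF : p ∈ F := le_faceClosure _ (AddSubmonoid.mem_multiples p)
  obtain ⟨q, huS, huF⟩ := hS.le_faceClosure_inf hF hpF
  have hu0 : p + q ≠ 0 := fun h ↦ hp0 (hP.eq_zero_of_add_eq_zero h)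
  have hunit : F ≤ faceClosure (AddSubmonoid.multiples (p + q)) :=
    faceClosure_le (isFace_faceClosure _) <|
      AddSubmonoid.multiples_le.2 ⟨q, AddSubmonoid.mem_multiples (p + q)⟩
  obtain ⟨φ, hφ, hφ_nonneg, hφu⟩ :=
    hS.exists_hom_real_nonneg hP hF η hη (u := ⟨p + q, huF⟩) huS hu0 hunit
  obtain ⟨y, n, hn⟩ := id huF
  replace hn : n • p = p + q + y := hn
  have hyF : y ∈ F := hF.mem_right (hn ▸ F.nsmul_mem hpF n)
  have hsum : φ ⟨p + q, huF⟩ + φ ⟨y, hyF⟩ = 0 := by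
    rw [← map_add]
    refine hφ _ ?_
    change η (p + q + y) = 0
    rw [← hn]
    simp [hp]
  linarith [hφ_nonneg ⟨y, hyF⟩]

end HasUniqueHomExtension

end UniqueHomExtension

section Groupification

variable {M G : Type*} [AddCommMonoid M] [AddCommGroup G] {η : M →+ G}

theorem IsGroupification.apply_eq_zero_iff (hη : IsGroupification η) {m : M} :
    η m = 0 ↔ ∃ k, m + k = k := by
  simpa using hη.2 m 0

theorem IsGroupification.apply_eq_of_apply_eq (hη : IsGroupification η) {A : Type*}
    [AddCommGroup A] (φ : M →+ A) {a b : M} (h : η a = η b) : φ a = φ b := by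
  obtain ⟨k, hk⟩ := (hη.2 a b).1 h
  simpa using congrArg φ hk

end Groupification

namespace IsMonPushout

variable {N : Type uN} {M : Type uM} {L : Type uL} {P : Type uP}
  [AddCommMonoid N] [AddCommMonoid M] [AddCommMonoid L] [AddCommMonoid P]
  {f : N →+ M} {g : N →+ L} {iM : M →+ P} {iL : L →+ P}

theorem toType (h : IsMonPushout.{uN, uM, uL, uP, w} f g iM iL) :
    IsMonPushout.{uN, uM, uL, uP, 0} f g iM iL := by
  refine ⟨h.1, fun Q _ jM jL hj ↦ ?_⟩
  let e : Q ≃+ ULift.{w} Q := AddEquiv.ulift.symm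
  obtain ⟨k, ⟨hkM, hkL⟩, hk⟩ := h.2 (ULift.{w} Q) (e.toAddMonoidHom.comp jM)
    (e.toAddMonoidHom.comp jL) (by rw [AddMonoidHom.comp_assoc, hj, AddMonoidHom.comp_assoc])
  refine ⟨e.symm.toAddMonoidHom.comp k, ⟨?_, ?_⟩, ?_⟩
  · rw [AddMonoidHom.comp_assoc, hkM]; rfl
  · rw [AddMonoidHom.comp_assoc, hkL]; rfl
  · rintro k' ⟨rfl, rfl⟩
    rw [← hk (e.toAddMonoidHom.comp k') ⟨rfl, rfl⟩]
    rfl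

theorem apply_eq (h : IsMonPushout.{uN, uM, uL, uP, w} f g iM iL) (n : N) :
    iM (f n) = iL (g n) :=
  DFunLike.congr_fun h.1 n

theorem hasUniqueHomExtension (h : IsMonPushout.{uN, uM, uL, uP, w} f g iM iL) :
    HasUniqueHomExtension (AddMonoidHom.mrange (iM.coprod iL)) := by
  intro Q _
  have hM (m : M) : iM m ∈ AddMonoidHom.mrange (iM.coprod iL) := ⟨(m, 0), by simp⟩
  have hL (l : L) : iL l ∈ AddMonoidHom.mrange (iM.coprod iL) := ⟨(0, l), by simp⟩
  constructor
  · intro h₁ h₂ h₁₂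
    have heq {x : P} (hx : x ∈ AddMonoidHom.mrange (iM.coprod iL)) : h₁ x = h₂ x :=
      DFunLike.congr_fun h₁₂ ⟨x, hx⟩
    refine (h.toType.2 Q (h₂.comp iM) (h₂.comp iL) ?_).unique ⟨?_, ?_⟩ ⟨rfl, rfl⟩
    · rw [AddMonoidHom.comp_assoc, h.1, AddMonoidHom.comp_assoc]
    · exact AddMonoidHom.ext fun m ↦ heq (hM m)
    · exact AddMonoidHom.ext fun l ↦ heq (hL l)
  · intro j
    obtain ⟨k, ⟨hkM, hkL⟩, -⟩ := h.toType.2 Q (j.comp (iM.codRestrict _ hM))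
      (j.comp (iL.codRestrict _ hL)) <|
      AddMonoidHom.ext fun n ↦ congrArg j (Subtype.ext (h.apply_eq n))
    refine ⟨k, AddMonoidHom.ext ?_⟩
    rintro ⟨_, ⟨m, l⟩, rfl⟩
    calc k (iM m + iL l) = j ⟨iM m, hM m⟩ + j ⟨iL l, hL l⟩ := by
          rw [map_add]
          exact congrArg₂ _ (DFunLike.congr_fun hkM m) (DFunLike.congr_fun hkL l)
      _ = j ⟨iM m + iL l, _⟩ := (j.map_add _ _).symm

theorem eq_zero_of_add_eq_zero (h : IsMonPushout.{uN, uM, uL, uP, w} f g iM iL)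
    (hNs : IsSharp N) (hMs : IsSharp M) (hLs : IsSharp L) (hf : IsLocalMonoidHom f)
    (hg : IsLocalMonoidHom g) {m : M} {l : L} (hml : iM m + iL l = 0) : m = 0 ∧ l = 0 := by
  have hf_bot (n : N) : f n ∈ (⊥ : AddSubmonoid M) ↔ n = 0 :=
    ⟨fun hn ↦ hNs n (hf n (by simp [(AddSubmonoid.mem_bot).1 hn])), by rintro rfl; simp⟩
  have hg_bot (n : N) : g n ∈ (⊥ : AddSubmonoid L) ↔ n = 0 :=
    ⟨fun hn ↦ hNs n (hg n (by simp [(AddSubmonoid.mem_bot).1 hn])), by rintro rfl; simp⟩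
  obtain ⟨k, ⟨hkM, hkL⟩, -⟩ := h.toType.2 (WithTop ℕ) (hMs.isFace_bot.extendTop 0)
    (hLs.isFace_bot.extendTop 0) (AddMonoidHom.ext fun n ↦ by
      by_cases hn : n = 0
      · rw [hn, map_zero, map_zero]
      · exact (hMs.isFace_bot.extendTop_of_notMem 0 (mt (hf_bot n).1 hn)).trans
          (hLs.isFace_bot.extendTop_of_notMem 0 (mt (hg_bot n).1 hn)).symm)
  have hk : k (iM m) + k (iL l) = 0 := by rw [← map_add, hml, map_zero]
  obtain ⟨hkm, hkl⟩ := add_eq_zero.1 hk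
  exact ⟨hMs.isFace_bot.extendTop_zero_eq_zero_iff.1 ((DFunLike.congr_fun hkM m).symm.trans hkm),
    hLs.isFace_bot.extendTop_zero_eq_zero_iff.1 ((DFunLike.congr_fun hkL l).symm.trans hkl)⟩

theorem isSharp (h : IsMonPushout.{uN, uM, uL, uP, w} f g iM iL)
    (hNs : IsSharp N) (hMs : IsSharp M) (hLs : IsSharp L) (hf : IsLocalMonoidHom f)
    (hg : IsLocalMonoidHom g) : IsSharp P := by
  refine h.hasUniqueHomExtension.isSharp ?_
  rintro ⟨_, ⟨m, l⟩, rfl⟩ hs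
  obtain ⟨⟨_, ⟨m', l'⟩, rfl⟩, hy⟩ := hs.exists_neg
  have hsum : iM (m + m') + iL (l + l') = 0 := by
    rw [map_add, map_add, add_add_add_comm]
    exact congrArg Subtype.val hy
  obtain ⟨hm, hl⟩ := h.eq_zero_of_add_eq_zero hNs hMs hLs hf hg hsum
  rw [hMs.eq_zero_of_add_eq_zero hm, hLs.eq_zero_of_add_eq_zero hl]
  exact Subtype.ext (map_zero _)

section Groupification

variable {Ngp Mgp Lgp Pgp : Type*}
  [AddCommGroup Ngp] [AddCommGroup Mgp] [AddCommGroup Lgp] [AddCommGroup Pgp]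
  {ηN : N →+ Ngp} {ηM : M →+ Mgp} {ηL : L →+ Lgp} {F : Ngp →+ Mgp} {G : Ngp →+ Lgp}

theorem exists_of_add_add_eq (h : IsMonPushout.{uN, uM, uL, uP, w} f g iM iL)
    (hF : F.comp ηN = ηM.comp f) (hG : G.comp ηN = ηL.comp g) {m : M} {l : L} {k : P}
    (hk : iM m + iL l + k = k) : ∃ n, F n = ηM m ∧ -G n = ηL l := by
  suffices (ηM m, ηL l) ∈ (F.prod (-G)).range from this.imp fun _ ↦ Prod.ext_iff.1
  by_contra hml
  obtain ⟨χ, hχ, hχml⟩ := exists_hom_addCircle_apply_ne_zero _ hml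
  obtain ⟨k', ⟨hkM, hkL⟩, -⟩ := h.toType.2 _ ((χ.comp (.inl _ _)).comp ηM)
    ((χ.comp (.inr _ _)).comp ηL) (by
      refine AddMonoidHom.ext fun n ↦ ?_
      have h0 : χ (F (ηN n), -G (ηN n)) = 0 := hχ _ ⟨ηN n, rfl⟩
      have hsplit : (F (ηN n), -G (ηN n)) = (ηM (f n), 0) - (0, ηL (g n)) := by
        rw [← AddMonoidHom.comp_apply, hF, ← AddMonoidHom.comp_apply G, hG]
        simp
      rwa [hsplit, map_sub, sub_eq_zero] at h0)
  have hk' : k' (iM m) + k' (iL l) = 0 := by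
    simpa only [map_add, add_eq_right] using congrArg k' hk
  refine hχml ?_
  calc χ (ηM m, ηL l) = χ (ηM m, 0) + χ (0, ηL l) := by rw [← map_add]; simp
    _ = k' (iM m) + k' (iL l) :=
      (congrArg₂ (· + ·) (DFunLike.congr_fun hkM m) (DFunLike.congr_fun hkL l)).symm
    _ = 0 := hk'

theorem apply_add_eq_zero_of_exists (h : IsMonPushout.{uN, uM, uL, uP, w} f g iM iL)
    (hN : ∀ x, ∃ a b, x = ηN a - ηN b) (hM : IsGroupification ηM) (hL : IsGroupification ηL)
    (hF : F.comp ηN = ηM.comp f) (hG : G.comp ηN = ηL.comp g) (ηP : P →+ Pgp) {m : M} {l : L}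
    {n : Ngp} (hm : F n = ηM m) (hl : -G n = ηL l) : ηP (iM m + iL l) = 0 := by
  obtain ⟨a, b, rfl⟩ := hN n
  have hFN (c : N) : F (ηN c) = ηM (f c) := DFunLike.congr_fun hF c
  have hGN (c : N) : G (ηN c) = ηL (g c) := DFunLike.congr_fun hG c
  have hm' : ηP (iM (m + f b)) = ηP (iM (f a)) :=
    hM.apply_eq_of_apply_eq (ηP.comp iM) (by simp [← hm, hFN])
  have hl' : ηP (iL (l + g a)) = ηP (iL (g b)) :=
    hL.apply_eq_of_apply_eq (ηP.comp iL) (by simp [← hl, hGN])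
  simp only [map_add, h.apply_eq] at hm' hl' ⊢
  rw [eq_sub_of_add_eq hm', eq_sub_of_add_eq hl']
  abel

theorem apply_add_eq_zero_iff (h : IsMonPushout.{uN, uM, uL, uP, w} f g iM iL)
    (hN : ∀ x, ∃ a b, x = ηN a - ηN b) (hM : IsGroupification ηM) (hL : IsGroupification ηL)
    (hF : F.comp ηN = ηM.comp f) (hG : G.comp ηN = ηL.comp g) {ηP : P →+ Pgp}
    (hP : IsGroupification ηP) {m : M} {l : L} :
    ηP (iM m + iL l) = 0 ↔ ∃ n, F n = ηM m ∧ -G n = ηL l := by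
  constructor
  · intro hml
    obtain ⟨k, hk⟩ := hP.apply_eq_zero_iff.1 hml
    exact h.exists_of_add_add_eq hF hG hk
  · rintro ⟨n, hm, hl⟩
    exact h.apply_add_eq_zero_of_exists hN hM hL hF hG ηP hm hl

end Groupification

end IsMonPushout

/-- Let `L, M, N` be sharp commutative monoids and `f : N → M`, `g : N → L` local
morphisms, with push-out `P = M ⊔_N L`.  Then `P` is quasi-integral if and only if `M`
and `L` are quasi-integral and, for every `n ∈ N^gp`, the conditions `f^gp n ∈ M^int`
and `-(g^gp n) ∈ L^int` imply `f^gp n = 0` and `g^gp n = 0`. -/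
theorem stmt7 {N M L P Ngp Mgp Lgp Pgp : Type*}
    [AddCommMonoid N] [AddCommMonoid M] [AddCommMonoid L] [AddCommMonoid P]
    [AddCommGroup Ngp] [AddCommGroup Mgp] [AddCommGroup Lgp] [AddCommGroup Pgp]
    (hNs : IsSharp N) (hMs : IsSharp M) (hLs : IsSharp L)
    (f : N →+ M) (g : N →+ L) (hf : IsLocalMonoidHom f) (hg : IsLocalMonoidHom g)
    (iM : M →+ P) (iL : L →+ P) (hpo : IsMonPushout f g iM iL)
    (ηN : N →+ Ngp) (hgpN : IsGroupification ηN)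
    (ηM : M →+ Mgp) (hgpM : IsGroupification ηM)
    (ηL : L →+ Lgp) (hgpL : IsGroupification ηL)
    (ηP : P →+ Pgp) (hgpP : IsGroupification ηP)
    (F : Ngp →+ Mgp) (hF : F.comp ηN = ηM.comp f)
    (G' : Ngp →+ Lgp) (hG : G'.comp ηN = ηL.comp g) :
    (∀ p : P, ηP p = 0 → p = 0) ↔
      ((∀ m : M, ηM m = 0 → m = 0) ∧ (∀ l : L, ηL l = 0 → l = 0) ∧
        ∀ n : Ngp, F n ∈ AddMonoidHom.mrange ηM → -(G' n) ∈ AddMonoidHom.mrange ηL →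
          F n = 0 ∧ G' n = 0) := by
  have key {m l} : ηP (iM m + iL l) = 0 ↔ ∃ n, F n = ηM m ∧ -G' n = ηL l :=
    hpo.apply_add_eq_zero_iff hgpN.1 hgpM hgpL hF hG hgpP
  have hzero {m l} : iM m + iL l = 0 → m = 0 ∧ l = 0 :=
    hpo.eq_zero_of_add_eq_zero hNs hMs hLs hf hg
  constructor
  · intro hP
    have hML (n m l) (hm : F n = ηM m) (hl : -G' n = ηL l) : m = 0 ∧ l = 0 :=
      hzero (hP _ (key.2 ⟨n, hm, hl⟩))
    refine ⟨fun m hm ↦ (hML 0 m 0 (by simp [hm]) (by simp)).1,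
      fun l hl ↦ (hML 0 0 l (by simp) (by simp [hl])).2, ?_⟩
    rintro n ⟨m, hm⟩ ⟨l, hl⟩
    obtain ⟨rfl, rfl⟩ := hML n m l hm.symm hl.symm
    exact ⟨by simpa using hm.symm, by simpa using hl.symm⟩
  · rintro ⟨hM, hL, hcond⟩ p hp
    refine hpo.hasUniqueHomExtension.eq_zero_of_apply_eq_zero
      (hpo.isSharp hNs hMs hLs hf hg) ηP ?_ hp
    rintro _ ⟨⟨m, l⟩, rfl⟩ hml
    obtain ⟨n, hm, hl⟩ : ∃ n, F n = ηM m ∧ -G' n = ηL l := key.1 hml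
    obtain ⟨hFn, hGn⟩ := hcond n ⟨m, hm.symm⟩ ⟨l, hl.symm⟩
    rw [hM m (hm ▸ hFn), hL l (by rw [← hl, hGn, neg_zero]), Prod.mk_zero_zero, map_zero]
end
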